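/- Let G be a torsion-free abelian group and let R be a G-graded commutative ring. Then the Jacobson radical of R is a graded ideal. -/

import Mathlib

/-!
Let `f` lie in the Jacobson radical, let `i ≠ 0` be a degree and put `r = f_i`. For every `k` the
element `u = f * r ^ k + 1` is a unit. For a suitable `k` no degree of `f * r ^ k` is `0`, so the
component of `u` in degree `0` is `1`, while the one in degree `(k + 1) • i` is `r ^ (k + 1)`.
Modulo a prime, the monoid algebra on a monoid with two unique sums is a domain all of whose units
are monomials; hence the product of two components of a unit in different degrees is nilpotent, and
`r` is nilpotent. All components of nonzero degree therefore lie in the Jacobson radical, and so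
does the component of degree `0`, as the difference of `f` and their sum.
-/

open DirectSum
open scoped AddMonoidAlgebra

section UniqueSums

variable {M : Type*} [AddMonoid M] [UniqueSums M] {m : M}

theorem nsmul_left_injective_of_uniqueSums (hm : m ≠ 0) :
    Function.Injective fun k : ℕ ↦ k • m := by
  let _ : AddCancelMonoid M := { ‹AddMonoid M›, UniqueSums.toIsCancelAdd with }
  refine injective_nsmul_iff_not_isOfFinAddOrder.2 fun hfin ↦ hm ?_
  obtain ⟨n, hn, hnm⟩ := hfin.exists_nsmul_eq_zero
  let S : Finset M := hfin.finite_multiples.toFinset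
  have mem_S {x : M} : x ∈ S ↔ x ∈ AddSubmonoid.multiples m := by
    rw [Set.Finite.mem_toFinset, SetLike.mem_coe]
  have hS : S.Nonempty := ⟨0, mem_S.2 (zero_mem _)⟩
  have hmem : m ∈ AddSubmonoid.multiples m := AddSubmonoid.mem_multiples m
  obtain ⟨a, ha, b, hb, unique⟩ := UniqueSums.uniqueAdd_of_nonempty hS hS
  have hsum : (a + m) + ((n - 1) • m + b) = a + b := by
    rw [add_assoc, ← add_assoc m, ← succ_nsmul', Nat.sub_add_cancel hn, hnm, zero_add]
  exact add_eq_left.1 (unique (mem_S.2 (add_mem (mem_S.1 ha) hmem))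
    (mem_S.2 (add_mem (nsmul_mem hmem _) (mem_S.1 hb))) hsum).1

theorem exists_nsmul_forall_mem_add_ne (hm : m ≠ 0) (s : Finset M) (c : M) :
    ∃ k : ℕ, ∀ a ∈ s, a + k • m ≠ c := by
  have := UniqueSums.toIsCancelAdd (G := M)
  by_contra! h
  choose a ha hac using h
  obtain ⟨k, l, hkl, hal⟩ := Finite.exists_ne_map_eq_of_infinite fun k ↦ (⟨a k, ha k⟩ : s)
  have hal : a k = a l := congrArg Subtype.val hal
  have hsum : a k + k • m = a k + l • m := by rw [hac k, hal, hac l]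
  exact hkl (nsmul_left_injective_of_uniqueSums hm (add_left_cancel hsum))

end UniqueSums

theorem twoUniqueSums_of_isAddTorsionFree (G : Type*) [AddCommGroup G] [IsAddTorsionFree G] :
    TwoUniqueSums G :=
  TwoUniqueSums.of_injective_addHom (DivisibleHull.coeAddMonoidHom G : G →ₙ+ DivisibleHull G)
    DivisibleHull.coe_injective inferInstance

section AddMonoidAlgebra

variable {A M : Type*}

theorem nontrivial_support_coeff_mul [Semiring A] [NoZeroDivisors A] [Add M] [TwoUniqueSums M]
    {x y : A[M]} (hx : x.coeff.support.Nontrivial) (hy : y ≠ 0) :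
    (x * y).coeff.support.Nontrivial := by
  have hy' : 0 < y.coeff.support.card :=
    Finset.card_pos.2 (Finsupp.support_nonempty_iff.2 (AddMonoidAlgebra.coeff_eq_zero.not.2 hy))
  have hcard : 1 < x.coeff.support.card * y.coeff.support.card :=
    (Finset.one_lt_card_iff_nontrivial.2 hx).trans_le (Nat.le_mul_of_pos_right _ hy')
  obtain ⟨⟨a, b⟩, hab, ⟨c, d⟩, hcd, hne, unique_ab, unique_cd⟩ :=
    TwoUniqueSums.uniqueAdd_of_one_lt_card hcard
  rw [Finset.mem_product] at hab hcd
  have add_mem_support {a b : M} (ha : a ∈ x.coeff.support) (hb : b ∈ y.coeff.support)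
      (h : UniqueAdd x.coeff.support y.coeff.support a b) : a + b ∈ (x * y).coeff.support := by
    rw [Finsupp.mem_support_iff] at ha hb ⊢
    rw [AddMonoidAlgebra.coeff_mul_add_of_uniqueAdd h]
    exact mul_ne_zero ha hb
  refine ⟨a + b, add_mem_support hab.1 hab.2 unique_ab,
    c + d, add_mem_support hcd.1 hcd.2 unique_cd, fun h ↦ hne ?_⟩
  obtain ⟨hca, hdb⟩ := unique_ab hcd.1 hcd.2 h.symm
  exact Prod.ext hca.symm hdb.symm

variable [CommRing A] [AddMonoid M] [TwoUniqueSums M]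

theorem isNilpotent_coeff_mul_coeff_of_isUnit {u : A[M]} (hu : IsUnit u) {m n : M} (hmn : m ≠ n) :
    IsNilpotent (u.coeff m * u.coeff n) := by
  refine nilpotent_iff_mem_prime.2 fun p hp ↦ ?_
  by_contra hmem
  let π : A[M] →+* (A ⧸ p)[M] := AddMonoidAlgebra.mapRingHom M (Ideal.Quotient.mk p)
  have mem_support {k : M} (hk : u.coeff k ∉ p) : k ∈ (π u).coeff.support := by
    rwa [Finsupp.mem_support_iff, AddMonoidAlgebra.coeff_mapRingHom, ne_eq,
      Ideal.Quotient.eq_zero_iff_mem]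
  have hπu : (π u).coeff.support.Nontrivial :=
    ⟨m, mem_support fun h ↦ hmem (p.mul_mem_right _ h),
      n, mem_support fun h ↦ hmem (p.mul_mem_left _ h), hmn⟩
  obtain ⟨v, huv⟩ := hu.exists_right_inv
  have hπuv : π u * π v = 1 := by rw [← map_mul, huv, map_one]
  have hone : (1 : (A ⧸ p)[M]).coeff.support.Nontrivial :=
    hπuv ▸ nontrivial_support_coeff_mul hπu (right_ne_zero_of_mul_eq_one hπuv)
  exact Finset.not_nontrivial_singleton (hone.mono Finsupp.support_single_subset)

theorem isNilpotent_coeff_of_forall_isUnit_mul_single_add_one {x : A[M]} {m : M} (hm : m ≠ 0)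
    (hx : ∀ k : ℕ, IsUnit (x * .single (k • m) (x.coeff m ^ k) + 1)) :
    IsNilpotent (x.coeff m) := by
  classical
  have := UniqueSums.toIsCancelAdd (G := M)
  obtain ⟨k, hk⟩ := exists_nsmul_forall_mem_add_ne hm x.coeff.support 0
  let y : A[M] := x * .single (k • m) (x.coeff m ^ k)
  have hdeg : (k + 1) • m ≠ 0 := fun h ↦
    k.succ_ne_zero (nsmul_left_injective_of_uniqueSums hm (h.trans (zero_nsmul m).symm))
  have hy₀ : y.coeff 0 = 0 := by
    refine Finsupp.notMem_support_iff.1 fun h ↦ ?_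
    obtain ⟨a, ha, ha₀⟩ :=
      Finset.mem_image.1 (AddMonoidAlgebra.support_coeff_mul_single_subset x _ _ h)
    exact hk a ha ha₀
  have hy : y.coeff ((k + 1) • m) = x.coeff m ^ (k + 1) := by
    rw [AddMonoidAlgebra.coeff_mul_single_eq_coeff_mul m fun a _ ↦ by
      rw [succ_nsmul', add_left_inj], pow_succ']
  have hone : (1 : A[M]).coeff ((k + 1) • m) = 0 := Finsupp.single_eq_of_ne hdeg
  have hnil := isNilpotent_coeff_mul_coeff_of_isUnit (hx k) hdeg
  rw [AddMonoidAlgebra.coeff_add, Finsupp.add_apply, Finsupp.add_apply, hy, hone, hy₀] at hnil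
  simpa [AddMonoidAlgebra.one_def] using hnil

end AddMonoidAlgebra

section GradedRing

variable {ι σ R : Type*} [DecidableEq ι] [AddMonoid ι] [SetLike σ R]

section Semiring

variable [Semiring R] [AddSubmonoidClass σ R] (𝒜 : ι → σ) [GradedRing 𝒜]

/-- The coaction `r ↦ ∑ i, r_i X ^ i` of a graded ring, recording the homogeneous components of `r`
as the coefficients of an element of the monoid algebra on the degrees. -/
noncomputable def gradedCoaction : R →+* R[ι] :=
  (DirectSum.toSemiring
    (fun i ↦ (AddMonoidAlgebra.singleAddHom i).comp (AddSubmonoidClass.subtype (𝒜 i)))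
    rfl fun _ _ ↦ (AddMonoidAlgebra.single_mul_single ..).symm).comp
  (decomposeRingEquiv 𝒜 : R →+* ⨁ i, 𝒜 i)

variable {𝒜} in
theorem gradedCoaction_of_mem {i : ι} {r : R} (hr : r ∈ 𝒜 i) :
    gradedCoaction 𝒜 r = .single i r := by
  lift r to 𝒜 i using hr
  have hdecompose : (decomposeRingEquiv 𝒜 : R →+* ⨁ i, 𝒜 i) r = of (𝒜 ·) i r :=
    decompose_coe 𝒜 r
  rw [gradedCoaction, RingHom.comp_apply, hdecompose]
  exact toSemiring_of ..

theorem coeff_gradedCoaction (r : R) (i : ι) :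
    (gradedCoaction 𝒜 r).coeff i = decompose 𝒜 r i := by
  induction r using Decomposition.inductionOn 𝒜 with
  | zero => simp
  | homogeneous r =>
    rw [gradedCoaction_of_mem r.2, AddMonoidAlgebra.coeff_single, decompose_coe, coe_of_apply,
      Finsupp.single_apply]
    split_ifs <;> rfl
  | add r s hr hs => simp [hr, hs]

end Semiring

theorem isHomogeneous_of_forall_ne [Ring R] [AddSubmonoidClass σ R] (𝒜 : ι → σ) [GradedRing 𝒜]
    {I : Ideal R} (j : ι) (h : ∀ f ∈ I, ∀ i ≠ j, (decompose 𝒜 f i : R) ∈ I) :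
    I.IsHomogeneous 𝒜 := by
  classical
  intro i f hf
  obtain rfl | hij := eq_or_ne i j
  · by_contra hfi
    have hi : i ∈ (decompose 𝒜 f).support := DFinsupp.mem_support_iff.2 fun h₀ ↦
      hfi (by rw [h₀]; exact I.zero_mem)
    have hrest : ∑ l ∈ (decompose 𝒜 f).support.erase i, (decompose 𝒜 f l : R) ∈ I :=
      I.sum_mem fun l hl ↦ h f hf l (Finset.ne_of_mem_erase hl)
    rw [← sum_support_decompose 𝒜 f, ← Finset.add_sum_erase _ _ hi, I.add_mem_iff_left hrest] at hf
    exact hfi hf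
  · exact h f hf i hij

variable [TwoUniqueSums ι] [CommRing R] [AddSubmonoidClass σ R] (𝒜 : ι → σ) [GradedRing 𝒜]

theorem isNilpotent_decompose_of_mem_jacobson {f : R} (hf : f ∈ Ideal.jacobson (⊥ : Ideal R))
    {i : ι} (hi : i ≠ 0) : IsNilpotent (decompose 𝒜 f i : R) := by
  rw [← coeff_gradedCoaction]
  refine isNilpotent_coeff_of_forall_isUnit_mul_single_add_one hi fun k ↦ ?_
  have hmem : (decompose 𝒜 f i : R) ^ k ∈ 𝒜 (k • i) :=
    SetLike.pow_mem_graded k (SetLike.coe_mem _)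
  rw [coeff_gradedCoaction, ← gradedCoaction_of_mem hmem, ← map_mul,
    ← map_one (gradedCoaction 𝒜), ← map_add]
  exact (Ideal.mem_jacobson_bot.1 hf _).map (gradedCoaction 𝒜)

theorem jacobson_radical_isHomogeneous_general :
    Ideal.IsHomogeneous 𝒜 (Ideal.jacobson (⊥ : Ideal R)) :=
  isHomogeneous_of_forall_ne 𝒜 0 fun _ hf _ hi ↦
    Ideal.radical_le_jacobson (isNilpotent_decompose_of_mem_jacobson 𝒜 hf hi)

end GradedRing

/-- The Jacobson radical of a `G`-graded commutative ring with `G` a torsion-free abelian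
group is a graded ideal. -/
theorem jacobson_radical_isHomogeneous
    {G : Type*} [AddCommGroup G] [DecidableEq G]
    (hG : ∀ (n : ℕ) (x : G), n ≠ 0 → n • x = 0 → x = 0)
    {R : Type*} [CommRing R] (𝒜 : G → AddSubgroup R) [GradedRing 𝒜] :
    Ideal.IsHomogeneous 𝒜 (Ideal.jacobson (⊥ : Ideal R)) := by
  have : IsAddTorsionFree G := .of_not_isOfFinAddOrder fun x hx hfin ↦
    have ⟨n, hn, hnx⟩ := hfin.exists_nsmul_eq_zero
    hx (hG n x hn.ne' hnx)
  have := twoUniqueSums_of_isAddTorsionFree G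
  exact jacobson_radical_isHomogeneous_general 𝒜
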